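/- arXiv:2010.10040 — 2 statements merged into one kernel-verified Lean document; each statement's English description precedes it below -/
import Mathlib

section
/- For any Borel set R in the n-dimensional Euclidean space ℝⁿ, the Lebesgue measure of R equals (ω_n / 2ⁿ) times the n-dimensional Hausdorff measure of R, where ω_n is the Lebesgue measure of the unit ball in ℝⁿ. -/
open MeasureTheory

section Steiner
open Function

/-- length of the section of `A` in direction `i` through `x`. -/
noncomputable def secLen {n : ℕ} (A : Set (Fin n → ℝ)) (i : Fin n) (x : Fin n → ℝ) : ENNReal :=
  volume {t : ℝ | update x i t ∈ A}

/-- (open) Steiner symmetrization in direction `i`. -/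
def steinerSym {n : ℕ} (A : Set (Fin n → ℝ)) (i : Fin n) : Set (Fin n → ℝ) :=
  {x | ENNReal.ofReal (2 * |x i|) < secLen A i x}

lemma secLen_update {n : ℕ} (A : Set (Fin n → ℝ)) (i : Fin n) (x : Fin n → ℝ) (t : ℝ) :
    secLen A i (update x i t) = secLen A i x := by
  simp [secLen]

lemma lmarginal_indicator_eq {n : ℕ} {A : Set (Fin n → ℝ)} (hA : MeasurableSet A) (i : Fin n) :
    lmarginal (fun _ : Fin n => (volume : Measure ℝ)) {i} (A.indicator 1) = secLen A i := by
  rw [lmarginal_singleton]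
  ext x
  have hm : MeasurableSet {t : ℝ | update x i t ∈ A} := (measurable_update x) hA
  rw [secLen, ← lintegral_indicator_one hm]
  rfl

lemma measurable_secLen {n : ℕ} {A : Set (Fin n → ℝ)} (hA : MeasurableSet A) (i : Fin n) :
    Measurable (secLen A i) := by
  rw [← lmarginal_indicator_eq hA i]
  exact Measurable.lmarginal _ (measurable_one.indicator hA)

lemma measurableSet_steinerSym {n : ℕ} {A : Set (Fin n → ℝ)} (hA : MeasurableSet A) (i : Fin n) :
    MeasurableSet (steinerSym A i) := by
  refine measurableSet_lt ?_ (measurable_secLen hA i)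
  fun_prop

lemma volume_two_abs_lt (L : ENNReal) : volume {t : ℝ | ENNReal.ofReal (2 * |t|) < L} = L := by
  rcases eq_or_ne L ⊤ with rfl | hL
  · have : {t : ℝ | ENNReal.ofReal (2 * |t|) < ⊤} = Set.univ :=
      Set.eq_univ_of_forall fun t => ENNReal.ofReal_lt_top
    rw [this, Real.volume_univ]
  · lift L to NNReal using hL
    have : {t : ℝ | ENNReal.ofReal (2 * |t|) < (L : ENNReal)} = Set.Ioo (-(L / 2 : ℝ)) (L / 2) := by
      ext t
      rw [Set.mem_ofPred_eq, Set.mem_Ioo, ← abs_lt, ← ENNReal.ofReal_coe_nnreal,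
        ENNReal.ofReal_lt_ofReal_iff_of_nonneg (by positivity)]
      constructor <;> intro h <;> linarith
    rw [this, Real.volume_Ioo]
    simp

lemma volume_steinerSym {n : ℕ} {A : Set (Fin n → ℝ)} (hA : MeasurableSet A) (i : Fin n) :
    volume (steinerSym A i) = volume A := by
  have hS := measurableSet_steinerSym hA i
  rw [← lintegral_indicator_one hS, ← lintegral_indicator_one hA, volume_pi]
  refine lintegral_eq_of_lmarginal_eq {i} (measurable_one.indicator hS)
    (measurable_one.indicator hA) ?_
  rw [lmarginal_indicator_eq hS, lmarginal_indicator_eq hA]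
  ext x
  conv_rhs => rw [← volume_two_abs_lt (secLen A i x)]
  simp only [secLen, steinerSym, Set.mem_ofPred_eq, update_self, update_idem]

lemma section_bound {U V : Set ℝ} {c p q : ℝ} (h : ∀ u ∈ U, ∀ v ∈ V, |u - v| ≤ c)
    (hU : ENNReal.ofReal (2 * |p|) < volume U) (hV : ENNReal.ofReal (2 * |q|) < volume V) :
    |p - q| ≤ c := by
  have hUn : U.Nonempty := nonempty_of_measure_ne_zero (bot_le.trans_lt hU).ne'
  have hVn : V.Nonempty := nonempty_of_measure_ne_zero (bot_le.trans_lt hV).ne'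
  obtain ⟨u0, hu0⟩ := hUn
  obtain ⟨v0, hv0⟩ := hVn
  have bU : BddAbove U := ⟨v0 + c, fun u hu => by have := abs_le.1 (h u hu v0 hv0); linarith⟩
  have bU' : BddBelow U := ⟨v0 - c, fun u hu => by have := abs_le.1 (h u hu v0 hv0); linarith⟩
  have bV : BddAbove V := ⟨u0 + c, fun u hu => by have := abs_le.1 (h u0 hu0 u hu); linarith⟩
  have bV' : BddBelow V := ⟨u0 - c, fun u hu => by have := abs_le.1 (h u0 hu0 u hu); linarith⟩
  have key : ∀ W : Set ℝ, BddAbove W → BddBelow W → ∀ r : ℝ,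
      ENNReal.ofReal (2 * |r|) < volume W → 2 * |r| < sSup W - sInf W := by
    intro W h1 h2 r hr
    have : volume W ≤ ENNReal.ofReal (sSup W - sInf W) := by
      rw [← Real.volume_Icc]
      exact measure_mono fun w hw => ⟨csInf_le h2 hw, le_csSup h1 hw⟩
    exact (ENNReal.ofReal_lt_ofReal_iff_of_nonneg (by positivity)).1 (hr.trans_le this)
  have k1 := key U bU bU' p hU
  have k2 := key V bV bV' q hV
  have s1 : sSup U ≤ sInf V + c := by
    refine csSup_le ⟨u0, hu0⟩ fun u hu => ?_
    have : u - c ≤ sInf V := le_csInf ⟨v0, hv0⟩ fun v hv => by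
      have := abs_le.1 (h u hu v hv); linarith
    linarith
  have s2 : sSup V ≤ sInf U + c := by
    refine csSup_le ⟨v0, hv0⟩ fun v hv => ?_
    have : v - c ≤ sInf U := le_csInf ⟨u0, hu0⟩ fun u hu => by
      have := abs_le.1 (h u hu v hv); linarith
    linarith
  have := abs_sub p q
  linarith

lemma diam_steinerSym {n : ℕ} {A : Set (Fin n → ℝ)} (i : Fin n) {D : ℝ}
    (h : ∀ x ∈ A, ∀ y ∈ A, ∑ j, (x j - y j) ^ 2 ≤ D) :
    ∀ x ∈ steinerSym A i, ∀ y ∈ steinerSym A i, ∑ j, (x j - y j) ^ 2 ≤ D := by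
  intro x hx y hy
  set S := ∑ j ∈ Finset.univ.erase i, (x j - y j) ^ 2 with hS
  have hsplit : ∀ u v : ℝ, ∑ j, (update x i u j - update y i v j) ^ 2 = (u - v) ^ 2 + S := by
    intro u v
    rw [← Finset.add_sum_erase _ _ (Finset.mem_univ i)]
    congr 1
    · simp
    · refine Finset.sum_congr rfl fun j hj => ?_
      rw [update_of_ne (Finset.ne_of_mem_erase hj), update_of_ne (Finset.ne_of_mem_erase hj)]
  have hb : ∀ u ∈ {t : ℝ | update x i t ∈ A}, ∀ v ∈ {t : ℝ | update y i t ∈ A},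
      |u - v| ≤ Real.sqrt (D - S) := by
    intro u hu v hv
    have := h _ hu _ hv
    rw [hsplit] at this
    exact Real.abs_le_sqrt (by linarith)
  have hne : {t : ℝ | update x i t ∈ A}.Nonempty :=
    nonempty_of_measure_ne_zero (bot_le.trans_lt hx).ne'
  have hne' : {t : ℝ | update y i t ∈ A}.Nonempty :=
    nonempty_of_measure_ne_zero (bot_le.trans_lt hy).ne'
  obtain ⟨u, hu⟩ := hne
  obtain ⟨v, hv⟩ := hne'
  have hDS : 0 ≤ D - S := by
    have := h _ hu _ hv
    rw [hsplit] at this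
    nlinarith [sq_nonneg (u - v)]
  have hp := section_bound hb hx hy
  have := hsplit (x i) (y i)
  rw [update_eq_self, update_eq_self] at this
  rw [this]
  have h2 : (x i - y i) ^ 2 ≤ D - S := by
    rw [← sq_abs, ← Real.sq_sqrt hDS]
    gcongr
  linarith

lemma exists_symmetrized {n : ℕ} {A : Set (Fin n → ℝ)} (hA : MeasurableSet A) {D : ℝ}
    (h : ∀ x ∈ A, ∀ y ∈ A, ∑ j, (x j - y j) ^ 2 ≤ D) (s : Finset (Fin n)) :
    ∃ B : Set (Fin n → ℝ), MeasurableSet B ∧ volume B = volume A ∧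
      (∀ x ∈ B, ∀ y ∈ B, ∑ j, (x j - y j) ^ 2 ≤ D) ∧
      ∀ j ∈ s, ∀ x ∈ B, update x j (- x j) ∈ B := by
  induction s using Finset.induction_on with
  | empty => exact ⟨A, hA, rfl, h, by simp⟩
  | insert i s hi ih =>
    obtain ⟨B, hB, hv, hd, hs⟩ := ih
    refine ⟨steinerSym B i, measurableSet_steinerSym hB i, (volume_steinerSym hB i).trans hv,
      diam_steinerSym i hd, ?_⟩
    intro j hj x hx
    rcases eq_or_ne j i with rfl | hne
    · simpa [steinerSym, secLen_update] using hx
    · have hjs : j ∈ s := (Finset.mem_insert.1 hj).resolve_left hne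
      have hle : secLen B i x ≤ secLen B i (update x j (- x j)) := by
        refine measure_mono fun t ht => ?_
        have := hs j hjs _ ht
        rw [update_of_ne hne, update_comm hne.symm] at this
        exact this
      have hx' : ENNReal.ofReal (2 * |x i|) < secLen B i x := hx
      show ENNReal.ofReal (2 * |update x j (- x j) i|) < _
      rw [update_of_ne hne.symm]
      exact hx'.trans_le hle

lemma isodiametric_pi {n : ℕ} {A : Set (Fin n → ℝ)} (hA : MeasurableSet A) {D : ℝ}
    (h : ∀ x ∈ A, ∀ y ∈ A, ∑ j, (x j - y j) ^ 2 ≤ D) :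
    volume A ≤ volume {x : Fin n → ℝ | 4 * ∑ j, x j ^ 2 ≤ D} := by
  obtain ⟨B, hB, hv, hd, hs⟩ := exists_symmetrized hA h Finset.univ
  rw [← hv]
  refine measure_mono fun x hx => ?_
  have hneg : ∀ s : Finset (Fin n), (fun j => if j ∈ s then - x j else x j) ∈ B := by
    intro s
    induction s using Finset.induction_on with
    | empty => simpa using hx
    | insert i s hi ih =>
      convert hs i (Finset.mem_univ i) _ ih using 1
      ext j
      rcases eq_or_ne j i with rfl | hne
      · simp [hi]
      · simp [hne]
  have h1 := hd x hx _ (hneg Finset.univ)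
  rw [Set.mem_ofPred_eq, Finset.mul_sum]
  convert h1 using 2 with j
  simp; ring

lemma isodiametric_real {n : ℕ} {A : Set (EuclideanSpace ℝ (Fin n))} (hA : MeasurableSet A) {d : ℝ}
    (hd : 0 ≤ d) (h : ∀ x ∈ A, ∀ y ∈ A, dist x y ≤ d) :
    volume A ≤ volume (Metric.closedBall (0 : EuclideanSpace ℝ (Fin n)) (d / 2)) := by
  have e := PiLp.volume_preserving_toLp (Fin n)
  rw [← e.measure_preimage hA.nullMeasurableSet,
    ← e.measure_preimage Metric.isClosed_closedBall.measurableSet.nullMeasurableSet]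
  refine (isodiametric_pi (D := d ^ 2) (e.measurable hA) ?_).trans (measure_mono ?_)
  · intro x hx y hy
    have := h _ hx _ hy
    rw [EuclideanSpace.dist_eq, Real.sqrt_le_left hd] at this
    simpa [Real.dist_eq, sq_abs] using this
  · intro x hx
    rw [Set.mem_ofPred_eq] at hx
    rw [Set.mem_preimage, mem_closedBall_zero_iff, EuclideanSpace.norm_eq,
      Real.sqrt_le_left (by positivity)]
    simp only [Real.norm_eq_abs, sq_abs]
    nlinarith
end Steiner

lemma volume_closedBall_scale {n : ℕ} (x : EuclideanSpace ℝ (Fin n)) {r : ℝ} (hr : 0 ≤ r) :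
    volume (Metric.closedBall x r) = ENNReal.ofReal r ^ n *
      volume (Metric.closedBall (0 : EuclideanSpace ℝ (Fin n)) 1) := by
  rw [Measure.addHaar_closedBall' _ _ hr, finrank_euclideanSpace_fin, ENNReal.ofReal_pow hr]

lemma isodiametric {n : ℕ} (A : Set (EuclideanSpace ℝ (Fin n))) (hb : Metric.ediam A ≠ ⊤) :
    volume A ≤ (volume (Metric.closedBall (0 : EuclideanSpace ℝ (Fin n)) 1) / 2 ^ n)
        * Metric.ediam A ^ n := by
  have h1 := isodiametric_real (A := closure A) isClosed_closure.measurableSet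
    (d := (Metric.ediam A).toReal) ENNReal.toReal_nonneg (by
      intro x hx y hy
      rw [dist_edist]
      refine ENNReal.toReal_mono hb ?_
      rw [← Metric.ediam_closure A]
      exact Metric.edist_le_ediam_of_mem hx hy)
  refine (measure_mono subset_closure).trans (h1.trans_eq ?_)
  rw [volume_closedBall_scale _ (by positivity), ENNReal.ofReal_div_of_pos (by norm_num),
    ENNReal.ofReal_toReal hb, ENNReal.div_eq_inv_mul, mul_pow, ENNReal.div_eq_inv_mul,
    ENNReal.inv_pow]
  simp only [ENNReal.ofReal_ofNat]
  ring

lemma volume_le_hausdorff {n : ℕ} (R : Set (EuclideanSpace ℝ (Fin n))) :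
    volume R ≤ (volume (Metric.closedBall (0 : EuclideanSpace ℝ (Fin n)) 1) / 2 ^ n)
        * μH[(n : ℝ)] R := by
  set c := volume (Metric.closedBall (0 : EuclideanSpace ℝ (Fin n)) 1) / 2 ^ n with hc
  have hc0 : c ≠ 0 := by
    refine (ENNReal.div_pos ?_ (by simp)).ne'
    exact (Metric.measure_closedBall_pos _ _ one_pos).ne'
  have hct : c ≠ ⊤ := ENNReal.div_ne_top measure_closedBall_lt_top.ne (by simp)
  have h : c⁻¹ • (volume : Measure (EuclideanSpace ℝ (Fin n))) ≤ μH[(n : ℝ)] := by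
    refine Measure.le_hausdorffMeasure _ _ 1 one_pos fun s hs => ?_
    have h1 := isodiametric s (hs.trans_lt ENNReal.one_lt_top).ne
    rw [Measure.smul_apply, smul_eq_mul, ENNReal.rpow_natCast]
    rwa [ENNReal.inv_mul_le_iff hc0 hct]
  have := h R
  rwa [Measure.smul_apply, smul_eq_mul, ENNReal.inv_mul_le_iff hc0 hct] at this

lemma exists_cover {n : ℕ} (δ : ℝ) (hδ : 0 < δ) :
    ∃ (t : Set (EuclideanSpace ℝ (Fin n))) (r : EuclideanSpace ℝ (Fin n) → ℝ), t.Countable ∧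
      (∀ x ∈ t, 0 < r x ∧ r x < δ) ∧
      volume (Metric.ball 0 1 \ ⋃ x ∈ t, Metric.closedBall x (r x)) = 0 ∧
      ∑' x : t, volume (Metric.closedBall (x : EuclideanSpace ℝ (Fin n)) (r x)) ≤
        volume (Metric.closedBall (0 : EuclideanSpace ℝ (Fin n)) 1) := by
  obtain ⟨t, r, ht, hts, hr, hv, hd⟩ := Besicovitch.exists_disjoint_closedBall_covering_ae
    (volume : Measure (EuclideanSpace ℝ (Fin n)))
    (fun x => {r | Metric.closedBall x r ⊆ Metric.ball 0 1}) (Metric.ball 0 1)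
    (by
      intro x hx δ hδ
      obtain ⟨ε, hε, hsub⟩ := Metric.nhds_basis_closedBall.mem_iff.1 (Metric.isOpen_ball.mem_nhds hx)
      refine ⟨min ε (δ / 2), ?_, by positivity, ?_⟩
      · exact (Metric.closedBall_subset_closedBall (min_le_left _ _)).trans hsub
      · exact (min_le_right _ _).trans_lt (by linarith))
    (fun _ => δ) (fun _ _ => hδ)
  refine ⟨t, r, ht, fun x hx => (hr x hx).2, hv, ?_⟩
  rw [← measure_biUnion ht hd fun x _ => Metric.isClosed_closedBall.measurableSet]
  refine measure_mono ((Set.iUnion₂_subset fun x hx => (hr x hx).1).trans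
    Metric.ball_subset_closedBall)

lemma hausdorff_ball_le (n : ℕ) :
    μH[(n : ℝ)] (Metric.ball (0 : EuclideanSpace ℝ (Fin n)) 1) ≤ 2 ^ n := by
  set ω := volume (Metric.closedBall (0 : EuclideanSpace ℝ (Fin n)) 1) with hω
  have hω0 : ω ≠ 0 := (Metric.measure_closedBall_pos _ _ one_pos).ne'
  have hωt : ω ≠ ⊤ := measure_closedBall_lt_top.ne
  choose t r ht hr hv hsum using fun k : ℕ => exists_cover (n := n) (1 / ((k : ℝ) + 1)) (by positivity)
  set s : Set (EuclideanSpace ℝ (Fin n)) := ⋂ k, ⋃ x ∈ t k, Metric.closedBall x (r k x) with hs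
  have hnull : volume (Metric.ball 0 1 \ s) = 0 := by
    rw [hs, Set.sdiff_iInter]
    exact measure_iUnion_null hv
  haveI : Measure.IsAddHaarMeasure (μH[(n : ℝ)] : Measure (EuclideanSpace ℝ (Fin n))) := by
    simpa using MeasureTheory.isAddHaarMeasure_hausdorffMeasure (E := EuclideanSpace ℝ (Fin n))
  have hnull' : μH[(n : ℝ)] (Metric.ball 0 1 \ s) = 0 := by
    rw [Measure.isAddLeftInvariant_eq_smul (μH[(n : ℝ)]) (volume : Measure (EuclideanSpace ℝ (Fin n))),
      Measure.smul_apply, hnull, smul_zero]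
  have hle : μH[(n : ℝ)] s ≤ 2 ^ n := by
    haveI : ∀ k, Countable (t k) := fun k => (ht k).to_subtype
    have hdiam : ∀ k (x : t k), Metric.ediam (Metric.closedBall (x : EuclideanSpace ℝ (Fin n)) (r k x)) ≤
        2 * ENNReal.ofReal (r k x) := by
      intro k x
      rw [← Metric.closedEBall_ofReal (hr k x x.2).1.le]
      exact Metric.ediam_closedEBall_le
    refine (Measure.hausdorffMeasure_le_liminf_tsum (ι := fun k => t k) (n : ℝ) s
      (l := Filter.atTop) (fun k : ℕ => 2 * ENNReal.ofReal (1 / ((k : ℝ) + 1))) ?_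
      (fun k x => Metric.closedBall (x : EuclideanSpace ℝ (Fin n)) (r k x)) ?_ ?_).trans ?_
    · have h1 := ENNReal.tendsto_ofReal (tendsto_one_div_add_atTop_nhds_zero_nat (𝕜 := ℝ))
      have h2 := ENNReal.Tendsto.const_mul (a := 2) h1 (Or.inr (by simp))
      simpa using h2
    · refine Filter.Eventually.of_forall fun k x => (hdiam k x).trans ?_
      gcongr
      exact (hr k x x.2).2.le
    · refine Filter.Eventually.of_forall fun k => ?_
      rw [Set.iUnion_subtype]
      exact Set.iInter_subset _ k
    · refine (Filter.liminf_le_liminf (v := fun _ => (2 : ENNReal) ^ n)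
        (Filter.Eventually.of_forall fun k => ?_)).trans_eq (Filter.liminf_const _)
      have h3 : ∀ x : t k, Metric.ediam (Metric.closedBall (x : EuclideanSpace ℝ (Fin n)) (r k x)) ^ (n : ℝ)
          ≤ 2 ^ n * ω⁻¹ * volume (Metric.closedBall (x : EuclideanSpace ℝ (Fin n)) (r k x)) := by
        intro x
        rw [ENNReal.rpow_natCast, volume_closedBall_scale _ (hr k x x.2).1.le, ← hω]
        calc _ ≤ (2 * ENNReal.ofReal (r k x)) ^ n := by gcongr; exact hdiam k x
          _ = 2 ^ n * ENNReal.ofReal (r k x) ^ n * (ω⁻¹ * ω) := by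
            rw [ENNReal.inv_mul_cancel hω0 hωt, mul_pow, mul_one]
          _ = _ := by ring
      refine (ENNReal.tsum_le_tsum h3).trans ?_
      rw [ENNReal.tsum_mul_left]
      calc _ ≤ 2 ^ n * ω⁻¹ * ω := by gcongr; exact hsum k
        _ = 2 ^ n := by rw [mul_assoc, ENNReal.inv_mul_cancel hω0 hωt, mul_one]
  calc _ ≤ μH[(n : ℝ)] (s ∪ (Metric.ball 0 1 \ s)) := measure_mono (by
          intro x hx
          by_cases h : x ∈ s
          · exact Or.inl h
          · exact Or.inr ⟨hx, h⟩)
    _ ≤ _ := (measure_union_le _ _).trans (by rw [hnull', add_zero]; exact hle)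

/-- **Lebesgue measure versus Hausdorff measure in `ℝⁿ`.** For any Borel set `R` in the
`n`-dimensional Euclidean space, `vol R = (ω_n / 2ⁿ) · μH^n R`, where `ω_n` is the Lebesgue
measure of the unit ball. -/
theorem volume_eq_hausdorff_measure_normalized
    (n : ℕ) (R : Set (EuclideanSpace ℝ (Fin n))) (hR : MeasurableSet R) :
    volume R
      = (volume (Metric.closedBall (0 : EuclideanSpace ℝ (Fin n)) 1) / 2 ^ n)
        * μH[(n : ℝ)] R := by
  refine le_antisymm (volume_le_hausdorff R) ?_
  set ω := volume (Metric.closedBall (0 : EuclideanSpace ℝ (Fin n)) 1) with hω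
  have hω0 : ω ≠ 0 := (Metric.measure_closedBall_pos _ _ one_pos).ne'
  have hωt : ω ≠ ⊤ := measure_closedBall_lt_top.ne
  haveI : Measure.IsAddHaarMeasure (μH[(n : ℝ)] : Measure (EuclideanSpace ℝ (Fin n))) := by
    simpa using MeasureTheory.isAddHaarMeasure_hausdorffMeasure (E := EuclideanSpace ℝ (Fin n))
  have hsm := Measure.isAddLeftInvariant_eq_smul (μH[(n : ℝ)])
    (volume : Measure (EuclideanSpace ℝ (Fin n)))
  set c := Measure.addHaarScalarFactor (μH[(n : ℝ)])
    (volume : Measure (EuclideanSpace ℝ (Fin n))) with hcdef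
  have happ : ∀ S : Set (EuclideanSpace ℝ (Fin n)), μH[(n : ℝ)] S = (c : ENNReal) * volume S := by
    intro S
    conv_lhs => rw [hsm]
    rfl
  have hb : volume (Metric.ball (0 : EuclideanSpace ℝ (Fin n)) 1) = ω :=
    (Measure.addHaar_unitClosedBall_eq_addHaar_unitBall _).symm
  have h1 := hausdorff_ball_le n
  rw [happ, hb] at h1
  rw [happ, ← mul_assoc]
  calc _ = (c * ω) * (2 ^ n)⁻¹ * volume R := by rw [ENNReal.div_eq_inv_mul]; ring
    _ ≤ 2 ^ n * (2 ^ n)⁻¹ * volume R := by gcongr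
    _ = volume R := by rw [ENNReal.mul_inv_cancel (by simp) (by simp), one_mul]
end

section
/- Let g be a continuous Riemannian metric on the unit square [0,1]², and suppose that every Lipschitz curve joining the two opposite vertical sides {0}×[0,1] and {1}×[0,1] has g-length at least 1, and every Lipschitz curve joining the two opposite horizontal sides [0,1]×{0} and [0,1]×{1} has g-length at least 1. Then the g-area of the square, ∫_{[0,1]²} √(det g), is at least 1. -/
open MeasureTheory Matrix intervalIntegral

/-- The `g`-length of a curve `γ : ℝ → ℝ²` (restricted to `[0,1]`) with respect to a
Riemannian metric `g`, given pointwise by a `2 × 2` matrix. -/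
noncomputable def gLength2 (g : (Fin 2 → ℝ) → Matrix (Fin 2) (Fin 2) ℝ)
    (γ : ℝ → (Fin 2 → ℝ)) : ℝ :=
  ∫ t in (0:ℝ)..1, Real.sqrt ((deriv γ t) ⬝ᵥ (g (γ t)).mulVec (deriv γ t))

open Set Filter Topology

/-- linear algebra: two covectors of `g`-norm at most one -/
lemma bes_linalg (G : Matrix (Fin 2) (Fin 2) ℝ) (hG : G.PosDef) (a b : Fin 2 → ℝ)
    (ha : ∀ w : Fin 2 → ℝ, a ⬝ᵥ w ≤ Real.sqrt (w ⬝ᵥ G.mulVec w))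
    (hb : ∀ w : Fin 2 → ℝ, b ⬝ᵥ w ≤ Real.sqrt (w ⬝ᵥ G.mulVec w)) :
    a 0 * b 1 - a 1 * b 0 ≤ Real.sqrt G.det := by
  have hD : 0 < G.det := hG.det_pos
  have hs : G 1 0 = G 0 1 := by
    have := hG.isHermitian.apply 0 1
    simpa using this
  have key : ∀ c : Fin 2 → ℝ, (∀ w : Fin 2 → ℝ, c ⬝ᵥ w ≤ Real.sqrt (w ⬝ᵥ G.mulVec w)) →
      G 1 1 * c 0 ^ 2 - 2 * G 0 1 * c 0 * c 1 + G 0 0 * c 1 ^ 2 ≤ G.det := by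
    intro c hc
    set A := G 1 1 * c 0 ^ 2 - 2 * G 0 1 * c 0 * c 1 + G 0 0 * c 1 ^ 2 with hA
    have h1 := hc ![G 1 1 * c 0 - G 0 1 * c 1, G 0 0 * c 1 - G 0 1 * c 0]
    have e1 : c ⬝ᵥ ![G 1 1 * c 0 - G 0 1 * c 1, G 0 0 * c 1 - G 0 1 * c 0] = A := by
      simp [dotProduct, Fin.sum_univ_two, hA]; ring
    have e2 : ![G 1 1 * c 0 - G 0 1 * c 1, G 0 0 * c 1 - G 0 1 * c 0] ⬝ᵥ
        G.mulVec ![G 1 1 * c 0 - G 0 1 * c 1, G 0 0 * c 1 - G 0 1 * c 0] = G.det * A := by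
      simp [dotProduct, mulVec, Fin.sum_univ_two, hA, Matrix.det_fin_two, hs]; ring
    rw [e1, e2] at h1
    by_contra hcon
    push Not at hcon
    have hA0 : 0 < A := hD.trans hcon
    have h2 : A ^ 2 ≤ G.det * A := by
      have := pow_le_pow_left₀ hA0.le h1 2
      rwa [Real.sq_sqrt (by positivity)] at this
    nlinarith
  have kA := key a ha
  have kB := key b hb
  have h00 : 0 < G 0 0 := hG.diag_pos
  apply Real.le_sqrt_of_sq_le
  set A := G 1 1 * a 0 ^ 2 - 2 * G 0 1 * a 0 * a 1 + G 0 0 * a 1 ^ 2 with hA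
  set B := G 1 1 * b 0 ^ 2 - 2 * G 0 1 * b 0 * b 1 + G 0 0 * b 1 ^ 2 with hB
  set X := G 1 1 * a 0 * b 0 - G 0 1 * (a 0 * b 1 + a 1 * b 0) + G 0 0 * a 1 * b 1 with hX
  have hdet : G.det = G 0 0 * G 1 1 - G 0 1 ^ 2 := by rw [Matrix.det_fin_two, hs]; ring
  have id1 : A * B - X ^ 2 = G.det * (a 0 * b 1 - a 1 * b 0) ^ 2 := by
    rw [hdet, hA, hB, hX]; ring
  have hB0 : 0 ≤ B := by
    have : G 0 0 * B = G.det * b 0 ^ 2 + (G 0 0 * b 1 - G 0 1 * b 0) ^ 2 := by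
      rw [hdet, hB]; ring
    have h3 : 0 ≤ G 0 0 * B := by rw [this]; positivity
    exact nonneg_of_mul_nonneg_right h3 h00
  have h4 : A * B ≤ G.det * G.det := mul_le_mul kA kB hB0 hD.le
  have h5 : G.det * (a 0 * b 1 - a 1 * b 0) ^ 2 ≤ G.det * G.det := by
    rw [← id1]; nlinarith [sq_nonneg X]
  exact le_of_mul_le_mul_left h5 hD

lemma bes_shift (F : ℝ → ℝ) (hF : Continuous F) (a b t c₀ c₁ : ℝ) (ht : 0 ≤ t)
    (h0 : ∀ x ≤ a + t, F x = c₀) (h1 : ∀ x, b ≤ x → F x = c₁) :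
    ∫ x in a..b, (F (x + t) - F x) = t * (c₁ - c₀) := by
  have hi : ∀ p q : ℝ, IntervalIntegrable F volume p q := fun p q => hF.intervalIntegrable p q
  rw [intervalIntegral.integral_sub (Continuous.intervalIntegrable (by fun_prop) _ _)
    (hi _ _), intervalIntegral.integral_comp_add_right F t]
  have e1 : ∫ x in a..(a+t), F x = t * c₀ := by
    rw [intervalIntegral.integral_congr (g := fun _ => c₀)]
    · simp
    · intro x hx
      rw [uIcc_of_le (by linarith)] at hx
      exact h0 x hx.2
  have e2 : ∫ x in b..(b+t), F x = t * c₁ := by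
    rw [intervalIntegral.integral_congr (g := fun _ => c₁)]
    · simp
    · intro x hx
      rw [uIcc_of_le (by linarith)] at hx
      exact h1 x hx.1
  have e3 := intervalIntegral.integral_add_adjacent_intervals (hi a (a+t)) (hi (a+t) (b+t))
  have e4 := intervalIntegral.integral_add_adjacent_intervals (hi a b) (hi b (b+t))
  linarith

/-- the discrete null Lagrangian -/
lemma bes_discrete (u v : ℝ × ℝ → ℝ) (hu : Continuous u) (hv : Continuous v)
    (u0 : ∀ x y, x ≤ 0 → u (x, y) = 0) (u1 : ∀ x y, 1 ≤ x → u (x, y) = 1)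
    (v0 : ∀ x y, y ≤ 0 → v (x, y) = 0) (v1 : ∀ x y, 1 ≤ y → v (x, y) = 1)
    (uy : ∀ x y, 1 ≤ y → u (x, y) = u (x, 1)) (vx : ∀ x y, 1 ≤ x → v (x, y) = v (1, y))
    (t : ℝ) (ht : 0 < t) (ht1 : t ≤ 1 / 2) :
    ∫ x in (-1:ℝ)..2, ∫ y in (-1:ℝ)..2,
      ((u (x + t, y + t) - u (x, y)) * (v (x, y + t) - v (x + t, y)) -
       (u (x, y + t) - u (x + t, y)) * (v (x + t, y + t) - v (x, y))) = 2 * t ^ 2 := by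
  set eh : ℝ → ℝ → ℝ := fun x y => u (x, y) * v (x + t, y) - u (x + t, y) * v (x, y) with heh
  set ev : ℝ → ℝ → ℝ := fun x y => u (x, y) * v (x, y + t) - u (x, y + t) * v (x, y) with hev
  have ceh : Continuous (fun p : ℝ × ℝ => eh p.1 p.2) := by simp only [heh]; fun_prop
  have cev : Continuous (fun p : ℝ × ℝ => ev p.1 p.2) := by simp only [hev]; fun_prop
  have cehx : ∀ x, Continuous (eh x) := fun x => by simp only [heh]; fun_prop
  have cevx : ∀ x, Continuous (ev x) := fun x => by simp only [hev]; fun_prop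
  set E : ℝ → ℝ := fun x => ∫ y in (-1:ℝ)..2, ev x y with hE
  have cE : Continuous E :=
    intervalIntegral.continuous_parametric_intervalIntegral_of_continuous' cev (-1) 2
  have inner : ∀ x, ∫ y in (-1:ℝ)..2,
      ((u (x + t, y + t) - u (x, y)) * (v (x, y + t) - v (x + t, y)) -
       (u (x, y + t) - u (x + t, y)) * (v (x + t, y + t) - v (x, y))) =
      t * (u (x + t, 1) - u (x, 1)) + (E (x + t) - E x) := by
    intro x
    have h1 : ∫ y in (-1:ℝ)..2, (eh x (y + t) - eh x y) = t * ((u (x, 1) - u (x+t, 1)) - 0) := by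
      apply bes_shift _ (cehx x) _ _ _ _ _ ht.le
      · intro y hy
        simp only [heh]
        rw [v0 _ _ (by linarith), v0 _ _ (by linarith)]; ring
      · intro y hy
        simp only [heh]
        rw [v1 _ _ (by linarith), v1 _ _ (by linarith), uy _ y (by linarith),
          uy (x+t) y (by linarith)]; ring
    have h2 : ∫ y in (-1:ℝ)..2, (ev (x+t) y - ev x y) = E (x + t) - E x :=
      intervalIntegral.integral_sub ((cevx _).intervalIntegrable _ _)
        ((cevx _).intervalIntegrable _ _)
    have h3 : ∀ y, ((u (x + t, y + t) - u (x, y)) * (v (x, y + t) - v (x + t, y)) -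
       (u (x, y + t) - u (x + t, y)) * (v (x + t, y + t) - v (x, y))) =
       (ev (x+t) y - ev x y) - (eh x (y + t) - eh x y) := by
      intro y; simp only [heh, hev]; ring
    simp_rw [h3]
    rw [intervalIntegral.integral_sub, h1, h2]
    · ring
    · exact Continuous.intervalIntegrable ((cevx _).sub (cevx _)) _ _
    · exact Continuous.intervalIntegrable
        (((cehx x).comp (continuous_add_const t)).sub (cehx x)) _ _
  simp_rw [inner]
  have cu : Continuous (fun x : ℝ => u (x, 1)) := by fun_prop
  rw [intervalIntegral.integral_add, intervalIntegral.integral_const_mul]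
  · have h1 : ∫ x in (-1:ℝ)..2, (u (x + t, 1) - u (x, 1)) = t * (1 - 0) := by
      apply bes_shift (fun x => u (x, 1)) cu _ _ _ _ _ ht.le
      · intro x hx; exact u0 _ _ (by linarith)
      · intro x hx; exact u1 _ _ (by linarith)
    have h2 : ∫ x in (-1:ℝ)..2, (E (x + t) - E x) = t * (t - 0) := by
      apply bes_shift E cE _ _ _ _ _ ht.le
      · intro x hx
        simp only [hE, hev]
        simp_rw [u0 x _ (show x ≤ 0 by linarith)]
        simp
      · intro x hx
        simp only [hE, hev]
        simp_rw [u1 x _ (show 1 ≤ x by linarith), vx x _ (show 1 ≤ x by linarith)]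
        have := bes_shift (fun y => v (1, y)) (by fun_prop) (-1) 2 t 0 1 ht.le
          (fun y hy => v0 _ _ (by linarith)) (fun y hy => v1 _ _ (by linarith))
        simp only [one_mul]
        rw [this]; ring
    rw [h1, h2]; ring
  · exact Continuous.intervalIntegrable (by fun_prop) _ _
  · exact Continuous.intervalIntegrable (by fun_prop) _ _

lemma bes_slope (u : ℝ × ℝ → ℝ) (p : ℝ × ℝ) (hu : DifferentiableAt ℝ u p) (w : ℝ × ℝ) :
    Tendsto (fun t : ℝ => t⁻¹ * (u (p + t • w) - u p)) (𝓝[>] 0) (𝓝 (fderiv ℝ u p w)) := by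
  have h1 : HasDerivAt (fun t : ℝ => p + t • w) w 0 := by
    simpa using ((hasDerivAt_id (0:ℝ)).smul_const w).const_add p
  have h2 : HasDerivAt (fun t : ℝ => u (p + t • w)) (fderiv ℝ u p w) 0 := by
    have h3 : HasFDerivAt u (fderiv ℝ u p) (p + (0:ℝ) • w) := by simpa using hu.hasFDerivAt
    exact h3.comp_hasDerivAt 0 h1
  have h4 := hasDerivAt_iff_tendsto_slope_zero.1 h2
  simp only [zero_add, zero_smul, add_zero, smul_eq_mul] at h4
  exact h4.mono_left (nhdsWithin_mono _ (fun x hx => ne_of_gt hx))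

lemma bes_null (u v : ℝ × ℝ → ℝ) (K K' : NNReal) (hu : LipschitzWith K u)
    (hv : LipschitzWith K' v)
    (u0 : ∀ x y, x ≤ 0 → u (x, y) = 0) (u1 : ∀ x y, 1 ≤ x → u (x, y) = 1)
    (v0 : ∀ x y, y ≤ 0 → v (x, y) = 0) (v1 : ∀ x y, 1 ≤ y → v (x, y) = 1)
    (uy : ∀ x y, 1 ≤ y → u (x, y) = u (x, 1)) (vx : ∀ x y, 1 ≤ x → v (x, y) = v (1, y)) :
    ∫ p in (Ioc (-1:ℝ) 2 ×ˢ Ioc (-1:ℝ) 2),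
      (fderiv ℝ u p (1, 0) * fderiv ℝ v p (0, 1) - fderiv ℝ u p (0, 1) * fderiv ℝ v p (1, 0))
      = 1 := by
  have cu := hu.continuous
  have cv := hv.continuous
  set S : Set (ℝ × ℝ) := Ioc (-1:ℝ) 2 ×ˢ Ioc (-1:ℝ) 2 with hS
  set Q : ℝ → ℝ × ℝ → ℝ := fun t p =>
      ((u (p.1 + t, p.2 + t) - u p) * (v (p.1, p.2 + t) - v (p.1 + t, p.2)) -
       (u (p.1, p.2 + t) - u (p.1 + t, p.2)) * (v (p.1 + t, p.2 + t) - v p)) with hQ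
  have cQ : ∀ t, Continuous (Q t) := fun t => by simp only [hQ]; fun_prop
  have hSfin : volume S ≠ ⊤ := by
    apply ne_of_lt
    apply lt_of_le_of_lt (measure_mono (show S ⊆ Icc (-1:ℝ) 2 ×ˢ Icc (-1:ℝ) 2 from
      prod_mono Ioc_subset_Icc_self Ioc_subset_Icc_self))
    exact (isCompact_Icc.prod isCompact_Icc).measure_lt_top
  have hQint : ∀ t, 0 < t → t ≤ 1/2 → ∫ p in S, (t⁻¹ ^ 2 * Q t p) = 2 := by
    intro t ht ht1
    have hI : IntegrableOn (Q t) S (volume.prod volume) := by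
      have : IntegrableOn (Q t) (Icc (-1:ℝ) 2 ×ˢ Icc (-1:ℝ) 2) (volume.prod volume) :=
        (cQ t).continuousOn.integrableOn_compact (isCompact_Icc.prod isCompact_Icc)
      exact this.mono_set (prod_mono Ioc_subset_Icc_self Ioc_subset_Icc_self)
    rw [MeasureTheory.integral_const_mul, Measure.volume_eq_prod, hS, setIntegral_prod _ hI]
    have := bes_discrete u v cu cv u0 u1 v0 v1 uy vx t ht ht1
    simp only [intervalIntegral.integral_of_le (show (-1:ℝ) ≤ 2 by norm_num)] at this
    simp only [hQ]
    rw [this]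
    field_simp
  have hlim : Tendsto (fun t => ∫ p in S, (t⁻¹ ^ 2 * Q t p)) (𝓝[>] 0)
      (𝓝 (∫ p in S, 2 * (fderiv ℝ u p (1, 0) * fderiv ℝ v p (0, 1)
        - fderiv ℝ u p (0, 1) * fderiv ℝ v p (1, 0)))) := by
    apply MeasureTheory.tendsto_integral_filter_of_dominated_convergence (fun _ => 2 * (K * K' : ℝ))
    · exact Eventually.of_forall fun t => (continuous_const.mul (cQ t)).aestronglyMeasurable
    · filter_upwards [self_mem_nhdsWithin] with t ht
      have ht : 0 < t := ht
      refine Eventually.of_forall fun p => ?_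
      have b : ∀ (f : ℝ × ℝ → ℝ) (C : NNReal), LipschitzWith C f → ∀ a b : ℝ × ℝ,
          |a.1 - b.1| ≤ t → |a.2 - b.2| ≤ t → |f a - f b| ≤ C * t := by
        intro f C hf a b h1 h2
        have := hf.dist_le_mul a b
        rw [Real.dist_eq] at this
        refine this.trans (mul_le_mul_of_nonneg_left ?_ C.2)
        rw [Prod.dist_eq]
        exact max_le h1 h2
      have a1 := b u K hu (p.1 + t, p.2 + t) p (by simp [abs_of_pos ht]) (by simp [abs_of_pos ht])
      have a2 := b u K hu (p.1, p.2 + t) (p.1 + t, p.2) (by simp [abs_of_pos ht])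
        (by simp [abs_of_pos ht])
      have a3 := b v K' hv (p.1 + t, p.2 + t) p (by simp [abs_of_pos ht]) (by simp [abs_of_pos ht])
      have a4 := b v K' hv (p.1, p.2 + t) (p.1 + t, p.2) (by simp [abs_of_pos ht])
        (by simp [abs_of_pos ht])
      have hq : |Q t p| ≤ 2 * (K * K') * t ^ 2 := by
        simp only [hQ]
        refine (abs_sub _ _).trans ?_
        rw [abs_mul, abs_mul]
        have m1 := mul_le_mul a1 a4 (abs_nonneg _) (by positivity)
        have m2 := mul_le_mul a2 a3 (abs_nonneg _) (by positivity)
        nlinarith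
      rw [Real.norm_eq_abs, abs_mul, abs_of_pos (by positivity : 0 < t⁻¹ ^ 2)]
      calc t⁻¹ ^ 2 * |Q t p| ≤ t⁻¹ ^ 2 * (2 * (K * K') * t ^ 2) := by gcongr
        _ = _ := by field_simp
    · exact integrableOn_const hSfin
    · have du : ∀ᵐ p : ℝ × ℝ, DifferentiableAt ℝ u p := hu.ae_differentiableAt
      have dv : ∀ᵐ p : ℝ × ℝ, DifferentiableAt ℝ v p := hv.ae_differentiableAt
      filter_upwards [ae_restrict_of_ae du, ae_restrict_of_ae dv] with p hup hvp
      have l := fun w => bes_slope u p hup w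
      have m := fun w => bes_slope v p hvp w
      have key := (((l (1,1)).mul ((m (0,1)).sub (m (1,0)))).sub
        (((l (0,1)).sub (l (1,0))).mul (m (1,1))))
      have e : ∀ f : ℝ × ℝ →L[ℝ] ℝ, f (1, 1) = f (1, 0) + f (0, 1) := by
        intro f; rw [← map_add]; simp
      have e2 : 2 * (fderiv ℝ u p (1, 0) * fderiv ℝ v p (0, 1)
          - fderiv ℝ u p (0, 1) * fderiv ℝ v p (1, 0)) =
          fderiv ℝ u p (1, 1) * (fderiv ℝ v p (0, 1) - fderiv ℝ v p (1, 0)) -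
          (fderiv ℝ u p (0, 1) - fderiv ℝ u p (1, 0)) * fderiv ℝ v p (1, 1) := by
        rw [e, e]; ring
      rw [e2]
      refine key.congr fun t => ?_
      have p1 : p + t • ((1:ℝ), (1:ℝ)) = (p.1 + t, p.2 + t) := by ext <;> simp
      have p2 : p + t • ((0:ℝ), (1:ℝ)) = (p.1, p.2 + t) := by ext <;> simp
      have p3 : p + t • ((1:ℝ), (0:ℝ)) = (p.1 + t, p.2) := by ext <;> simp
      rw [p1, p2, p3]
      simp only [hQ]
      ring
  have hev : (fun t => ∫ p in S, (t⁻¹ ^ 2 * Q t p)) =ᶠ[𝓝[>] 0] fun _ => (2:ℝ) := by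
    filter_upwards [Ioc_mem_nhdsGT (show (0:ℝ) < 1/2 by norm_num)] with t ht
    exact hQint t ht.1 ht.2
  have h2 := tendsto_nhds_unique (hlim.congr' hev) tendsto_const_nhds
  rw [MeasureTheory.integral_const_mul] at h2
  linarith

/-- the `g`-norm of a vector -/
noncomputable def besN (g : (Fin 2 → ℝ) → Matrix (Fin 2) (Fin 2) ℝ) (x w : Fin 2 → ℝ) : ℝ :=
  Real.sqrt (w ⬝ᵥ (g x).mulVec w)

lemma besN_nonneg (g : (Fin 2 → ℝ) → Matrix (Fin 2) (Fin 2) ℝ) (x w : Fin 2 → ℝ) :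
    0 ≤ besN g x w := Real.sqrt_nonneg _

lemma besN_cont {g : (Fin 2 → ℝ) → Matrix (Fin 2) (Fin 2) ℝ} (hg : Continuous g) :
    Continuous (fun z : (Fin 2 → ℝ) × (Fin 2 → ℝ) => besN g z.1 z.2) := by
  unfold besN
  exact Real.continuous_sqrt.comp
    (continuous_snd.dotProduct ((hg.comp continuous_fst).matrix_mulVec continuous_snd))

lemma besN_smul (g : (Fin 2 → ℝ) → Matrix (Fin 2) (Fin 2) ℝ) (x w : Fin 2 → ℝ) {c : ℝ}
    (hc : 0 ≤ c) : besN g x (c • w) = c * besN g x w := by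
  unfold besN
  rw [Matrix.mulVec_smul, dotProduct_smul, smul_dotProduct, smul_eq_mul, smul_eq_mul, ← mul_assoc,
    Real.sqrt_mul (mul_nonneg hc hc), Real.sqrt_mul_self hc]

lemma besN_bound {g : (Fin 2 → ℝ) → Matrix (Fin 2) (Fin 2) ℝ} (hg : Continuous g) :
    ∃ C : NNReal, ∀ x ∈ Icc (0 : Fin 2 → ℝ) 1, ∀ w, besN g x w ≤ C * ‖w‖ := by
  obtain ⟨C, hC⟩ := ((isCompact_Icc (a := (0 : Fin 2 → ℝ)) (b := 1)).prod
    (isCompact_closedBall (0 : Fin 2 → ℝ) 1)).exists_bound_of_continuousOn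
    (besN_cont hg).continuousOn
  refine ⟨C.toNNReal, fun x hx w => ?_⟩
  rcases eq_or_ne w 0 with rfl | hw
  · simp [besN]
  have hw' : 0 < ‖w‖ := norm_pos_iff.2 hw
  have h1 := hC (x, ‖w‖⁻¹ • w) ⟨hx, by simp [norm_smul, hw'.ne']⟩
  have h2 : besN g x w = ‖w‖ * besN g x (‖w‖⁻¹ • w) := by
    rw [← besN_smul _ _ _ hw'.le, smul_smul, mul_inv_cancel₀ hw'.ne', one_smul]
  rw [h2, mul_comm]
  gcongr
  exact ((le_abs_self _).trans h1).trans (Real.le_coe_toNNReal C)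

lemma besN_int {g : (Fin 2 → ℝ) → Matrix (Fin 2) (Fin 2) ℝ} (hg : Continuous g)
    (γ : ℝ → (Fin 2 → ℝ)) (K : NNReal) (hγ : LipschitzWith K γ) (a b : ℝ) :
    IntervalIntegrable (fun t => besN g (γ t) (deriv γ t)) volume a b := by
  have hcomp : IsCompact ((γ '' uIcc a b) ×ˢ Metric.closedBall (0 : Fin 2 → ℝ) K) :=
    (isCompact_uIcc.image hγ.continuous).prod (isCompact_closedBall _ _)
  obtain ⟨C, hC⟩ := hcomp.exists_bound_of_continuousOn (besN_cont hg).continuousOn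
  have hm : Measurable (fun t => besN g (γ t) (deriv γ t)) :=
    (besN_cont hg).measurable.comp (hγ.continuous.measurable.prodMk (measurable_deriv γ))
  rw [intervalIntegrable_iff]
  apply Measure.integrableOn_of_bounded (M := C) (by simp) hm.aestronglyMeasurable
  rw [ae_restrict_iff' measurableSet_uIoc]
  refine Eventually.of_forall fun t ht => ?_
  exact hC (γ t, deriv γ t) ⟨⟨t, uIoc_subset_uIcc ht, rfl⟩, by
    simpa using norm_deriv_le_of_lipschitz hγ⟩

/-- `p` can be reached from the face `x i = 0` by a curve of length `L` -/
def besReach (g : (Fin 2 → ℝ) → Matrix (Fin 2) (Fin 2) ℝ) (i : Fin 2) (p : Fin 2 → ℝ)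
    (L : ℝ) : Prop :=
  ∃ (T : ℝ) (γ : ℝ → (Fin 2 → ℝ)), 0 < T ∧ (∃ K : NNReal, LipschitzWith K γ) ∧
    (∀ t ∈ Icc (0:ℝ) T, γ t ∈ Icc (0 : Fin 2 → ℝ) 1) ∧ γ 0 i = 0 ∧ γ T = p ∧
    ∫ t in (0:ℝ)..T, besN g (γ t) (deriv γ t) = L

/-- length of a segment -/
noncomputable def besSeg (g : (Fin 2 → ℝ) → Matrix (Fin 2) (Fin 2) ℝ) (p w : Fin 2 → ℝ) : ℝ :=
  ∫ t in (0:ℝ)..1, besN g (p + t • w) w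

lemma besReach_base (g : (Fin 2 → ℝ) → Matrix (Fin 2) (Fin 2) ℝ) (i : Fin 2) (p : Fin 2 → ℝ)
    (hp : p ∈ Icc (0 : Fin 2 → ℝ) 1) (hpi : p i = 0) : besReach g i p 0 := by
  refine ⟨1, fun _ => p, one_pos, ⟨0, LipschitzWith.const p⟩, fun _ _ => hp, hpi, rfl, ?_⟩
  simp [besN]

lemma besReach_ext {g : (Fin 2 → ℝ) → Matrix (Fin 2) (Fin 2) ℝ} (hg : Continuous g) (i : Fin 2)
    (p q : Fin 2 → ℝ) (L : ℝ) (hp : p ∈ Icc (0 : Fin 2 → ℝ) 1) (hq : q ∈ Icc (0 : Fin 2 → ℝ) 1)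
    (h : besReach g i p L) : besReach g i q (L + besSeg g p (q - p)) := by
  obtain ⟨T, γ, hT, ⟨K, hK⟩, hin, h0, h1, hL⟩ := h
  set w := q - p with hw
  set δ : ℝ → (Fin 2 → ℝ) := fun t => γ (min t T) + (max 0 (min (t - T) 1)) • w with hδ
  have hlip : ∃ K : NNReal, LipschitzWith K δ := by
    have l1 : LipschitzWith 1 (fun t : ℝ => min t T) := LipschitzWith.id.min_const T
    have l0 : LipschitzWith 1 (fun t : ℝ => t - T) :=
      LipschitzWith.of_dist_le_mul fun x y => by simp
    have l2 : LipschitzWith 1 (fun t : ℝ => max 0 (min (t - T) 1)) :=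
      (l0.min_const 1).const_max 0
    have l3 : LipschitzWith ‖w‖₊ (fun s : ℝ => s • w) :=
      LipschitzWith.of_dist_le_mul fun x y => by
        rw [dist_eq_norm, ← sub_smul, norm_smul, mul_comm, dist_eq_norm]; rfl
    exact ⟨_, (hK.comp l1).add (l3.comp l2)⟩
  have hδ1 : ∀ t, t ≤ T → δ t = γ t := by
    intro t ht
    simp only [hδ]
    rw [min_eq_left ht, max_eq_left ((min_le_left _ _).trans (by linarith)), zero_smul, add_zero]
  have hδ2 : ∀ t, T ≤ t → t ≤ T + 1 → δ t = p + (t - T) • w := by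
    intro t ht ht'
    simp only [hδ]
    rw [min_eq_right ht, min_eq_left (by linarith), max_eq_right (by linarith), h1]
  have hδend : δ (T + 1) = q := by
    rw [hδ2 _ (by linarith) le_rfl, hw]; simp
  refine ⟨T + 1, δ, by linarith, hlip, ?_, ?_, hδend, ?_⟩
  · intro t ht
    rcases le_total t T with h | h
    · rw [hδ1 t h]; exact hin t ⟨ht.1, h⟩
    · rw [hδ2 t h ht.2]
      exact (convex_Icc (0 : Fin 2 → ℝ) 1).add_smul_sub_mem hp hq
        ⟨by linarith, by linarith [ht.2]⟩
  · rw [hδ1 0 hT.le, h0]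
  · obtain ⟨K', hK'⟩ := hlip
    rw [← intervalIntegral.integral_add_adjacent_intervals (besN_int hg δ K' hK' 0 T)
      (besN_int hg δ K' hK' T (T+1))]
    congr 1
    · rw [← hL]
      rw [intervalIntegral.integral_of_le hT.le, intervalIntegral.integral_of_le hT.le,
        integral_Ioc_eq_integral_Ioo, integral_Ioc_eq_integral_Ioo]
      apply setIntegral_congr_fun measurableSet_Ioo
      intro t ht
      have : δ =ᶠ[𝓝 t] γ := by
        filter_upwards [Iio_mem_nhds ht.2] with s hs using hδ1 s (le_of_lt hs)
      simp only [this.deriv_eq, hδ1 t ht.2.le]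
    · have e1 : ∫ t in T..(T+1), besN g (δ t) (deriv δ t) =
          ∫ t in T..(T+1), besN g (p + (t - T) • w) w := by
        rw [intervalIntegral.integral_of_le (by linarith),
          intervalIntegral.integral_of_le (by linarith),
          integral_Ioc_eq_integral_Ioo, integral_Ioc_eq_integral_Ioo]
        apply setIntegral_congr_fun measurableSet_Ioo
        intro t ht
        have : δ =ᶠ[𝓝 t] fun t => p + (t - T) • w := by
          filter_upwards [Ioo_mem_nhds ht.1 ht.2] with s hs using hδ2 s hs.1.le hs.2.le
        have hd : HasDerivAt (fun t : ℝ => p + (t - T) • w) w t := by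
          simpa using (((hasDerivAt_id t).sub_const T).smul_const w).const_add p
        simp only [this.deriv_eq, hd.deriv, hδ2 t ht.1.le ht.2.le]
      rw [e1, intervalIntegral.integral_comp_sub_right (fun t => besN g (p + t • w) w) T]
      simp [besSeg]

/-- the distance to the face `x i = 0` -/
noncomputable def besF (g : (Fin 2 → ℝ) → Matrix (Fin 2) (Fin 2) ℝ) (i : Fin 2)
    (p : Fin 2 → ℝ) : ℝ := sInf {L | besReach g i p L}

lemma besReach_nonneg {g : (Fin 2 → ℝ) → Matrix (Fin 2) (Fin 2) ℝ} {i : Fin 2}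
    {p : Fin 2 → ℝ} {L : ℝ} (h : besReach g i p L) : 0 ≤ L := by
  obtain ⟨T, γ, hT, -, -, -, -, hL⟩ := h
  rw [← hL]
  exact intervalIntegral.integral_nonneg hT.le fun t _ => besN_nonneg _ _ _

lemma besReach_bdd (g : (Fin 2 → ℝ) → Matrix (Fin 2) (Fin 2) ℝ) (i : Fin 2) (p : Fin 2 → ℝ) :
    BddBelow {L | besReach g i p L} := ⟨0, fun _ h => besReach_nonneg h⟩

lemma besReach_nonempty {g : (Fin 2 → ℝ) → Matrix (Fin 2) (Fin 2) ℝ} (hg : Continuous g)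
    (i : Fin 2) (p : Fin 2 → ℝ) (hp : p ∈ Icc (0 : Fin 2 → ℝ) 1) :
    {L | besReach g i p L}.Nonempty := by
  have hq : Function.update p i 0 ∈ Icc (0 : Fin 2 → ℝ) 1 := by
    constructor
    · intro j
      by_cases h : j = i
      · subst h; simp
      · simpa [h] using hp.1 j
    · intro j
      by_cases h : j = i
      · subst h; simp
      · simpa [h] using hp.2 j
  exact ⟨_, besReach_ext hg i _ p 0 hq hp (besReach_base g i _ hq (by simp))⟩

lemma besF_nonneg (g : (Fin 2 → ℝ) → Matrix (Fin 2) (Fin 2) ℝ) (i : Fin 2) (p : Fin 2 → ℝ) :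
    0 ≤ besF g i p := Real.sInf_nonneg fun _ h => besReach_nonneg h

lemma besF_zero (g : (Fin 2 → ℝ) → Matrix (Fin 2) (Fin 2) ℝ) (i : Fin 2) (p : Fin 2 → ℝ)
    (hp : p ∈ Icc (0 : Fin 2 → ℝ) 1) (hpi : p i = 0) : besF g i p = 0 :=
  le_antisymm (csInf_le (besReach_bdd g i p) (besReach_base g i p hp hpi)) (besF_nonneg g i p)

lemma besF_step {g : (Fin 2 → ℝ) → Matrix (Fin 2) (Fin 2) ℝ} (hg : Continuous g) (i : Fin 2)
    (p q : Fin 2 → ℝ) (hp : p ∈ Icc (0 : Fin 2 → ℝ) 1) (hq : q ∈ Icc (0 : Fin 2 → ℝ) 1) :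
    besF g i q ≤ besF g i p + besSeg g p (q - p) := by
  have : besF g i q - besSeg g p (q - p) ≤ besF g i p := by
    apply le_csInf (besReach_nonempty hg i p hp)
    intro L hL
    have := csInf_le (besReach_bdd g i q) (besReach_ext hg i p q L hp hq hL)
    unfold besF
    linarith
  linarith

lemma besF_one {g : (Fin 2 → ℝ) → Matrix (Fin 2) (Fin 2) ℝ} (hg : Continuous g) (i : Fin 2)
    (hdist : ∀ γ : ℝ → (Fin 2 → ℝ), (∃ K : NNReal, LipschitzWith K γ) →
      (∀ t ∈ Set.Icc (0:ℝ) 1, γ t ∈ Set.Icc (0 : Fin 2 → ℝ) 1) →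
      γ 0 i = 0 → γ 1 i = 1 → 1 ≤ gLength2 g γ)
    (p : Fin 2 → ℝ) (hp : p ∈ Icc (0 : Fin 2 → ℝ) 1) (hpi : p i = 1) : 1 ≤ besF g i p := by
  apply le_csInf (besReach_nonempty hg i p hp)
  rintro L ⟨T, γ, hT, ⟨K, hK⟩, hin, h0, h1, hL⟩
  have hlip : LipschitzWith T.toNNReal (fun t : ℝ => T * t) :=
    LipschitzWith.of_dist_le_mul fun x y => by
      rw [Real.dist_eq, Real.dist_eq, ← mul_sub, abs_mul, abs_of_pos hT, Real.coe_toNNReal _ hT.le]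
  have h := hdist (fun t => γ (T * t)) ⟨_, hK.comp hlip⟩
    (fun t ht => hin _ ⟨mul_nonneg hT.le ht.1, by nlinarith [ht.2]⟩) (by simpa using h0)
    (by simp [h1, hpi])
  refine h.trans (le_of_eq ?_)
  rw [← hL]
  have e : gLength2 g (fun t => γ (T * t)) =
      ∫ t in (0:ℝ)..1, T * besN g (γ (T * t)) (deriv γ (T * t)) := by
    unfold gLength2
    apply intervalIntegral.integral_congr
    intro t _
    simp only
    rw [← besN_smul _ _ _ hT.le, deriv_comp_mul_left]
    rfl
  rw [e, intervalIntegral.integral_const_mul,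
    intervalIntegral.mul_integral_comp_mul_left (f := fun t => besN g (γ t) (deriv γ t))]
  simp

lemma besSeg_nonneg (g : (Fin 2 → ℝ) → Matrix (Fin 2) (Fin 2) ℝ) (p w : Fin 2 → ℝ) :
    0 ≤ besSeg g p w :=
  intervalIntegral.integral_nonneg zero_le_one fun _ _ => besN_nonneg _ _ _

lemma besSeg_le {g : (Fin 2 → ℝ) → Matrix (Fin 2) (Fin 2) ℝ} (hg : Continuous g) (C : NNReal)
    (hC : ∀ x ∈ Icc (0 : Fin 2 → ℝ) 1, ∀ w, besN g x w ≤ C * ‖w‖) (p q : Fin 2 → ℝ)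
    (hp : p ∈ Icc (0 : Fin 2 → ℝ) 1) (hq : q ∈ Icc (0 : Fin 2 → ℝ) 1) :
    besSeg g p (q - p) ≤ C * ‖q - p‖ := by
  have : besSeg g p (q - p) ≤ ∫ t in (0:ℝ)..1, (C * ‖q - p‖ : ℝ) := by
    apply intervalIntegral.integral_mono_on zero_le_one
    · apply Continuous.intervalIntegrable
      exact (besN_cont hg).comp (f := fun t : ℝ => (p + t • (q - p), q - p)) (by fun_prop)
    · simp
    · intro t ht
      exact hC _ ((convex_Icc (0 : Fin 2 → ℝ) 1).add_smul_sub_mem hp hq ht) _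
  simpa using this

/-- projection to the unit square -/
noncomputable def besC (z : ℝ × ℝ) : Fin 2 → ℝ := ![max 0 (min z.1 1), max 0 (min z.2 1)]

lemma besC_mem (z : ℝ × ℝ) : besC z ∈ Icc (0 : Fin 2 → ℝ) 1 := by
  constructor <;> intro j <;> fin_cases j <;> simp [besC]

lemma besC_lip : LipschitzWith 1 besC := by
  have l : LipschitzWith 1 (fun t : ℝ => max 0 (min t 1)) :=
    (LipschitzWith.id.min_const 1).const_max 0
  apply LipschitzWith.of_dist_le_mul
  intro x y
  rw [dist_pi_le_iff (by positivity)]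
  have h1 := l.dist_le_mul x.1 y.1
  have h2 := l.dist_le_mul x.2 y.2
  simp only [NNReal.coe_one, one_mul] at h1 h2 ⊢
  rw [Prod.dist_eq]
  intro j
  fin_cases j
  · exact h1.trans (le_max_left _ _)
  · exact h2.trans (le_max_right _ _)

lemma besC_of_mem {z : ℝ × ℝ} (hz : z ∈ Icc (0:ℝ) 1 ×ˢ Icc (0:ℝ) 1) : besC z = ![z.1, z.2] := by
  obtain ⟨h1, h2⟩ := hz
  simp [besC, h1.1, h1.2, h2.1, h2.2]

/-- the truncated distance function on the plane -/
noncomputable def besU (g : (Fin 2 → ℝ) → Matrix (Fin 2) (Fin 2) ℝ) (i : Fin 2) (z : ℝ × ℝ) : ℝ :=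
  min (besF g i (besC z)) 1

lemma besU_step {g : (Fin 2 → ℝ) → Matrix (Fin 2) (Fin 2) ℝ} (hg : Continuous g) (i : Fin 2)
    (z y : ℝ × ℝ) : besU g i y ≤ besU g i z + besSeg g (besC z) (besC y - besC z) := by
  have h1 := besF_step hg i _ _ (besC_mem z) (besC_mem y)
  have h2 := besSeg_nonneg g (besC z) (besC y - besC z)
  unfold besU
  rw [← min_add_add_right]
  exact min_le_min h1 (by linarith)

lemma besU_lip {g : (Fin 2 → ℝ) → Matrix (Fin 2) (Fin 2) ℝ} (hg : Continuous g) (i : Fin 2) :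
    ∃ K : NNReal, LipschitzWith K (besU g i) := by
  obtain ⟨C, hC⟩ := besN_bound hg
  refine ⟨C, LipschitzWith.of_le_add_mul C fun y z => ?_⟩
  refine (besU_step hg i z y).trans ?_
  gcongr
  refine (besSeg_le hg C hC _ _ (besC_mem z) (besC_mem y)).trans ?_
  gcongr
  simpa [dist_eq_norm] using besC_lip.dist_le_mul y z

lemma besU_fderiv {g : (Fin 2 → ℝ) → Matrix (Fin 2) (Fin 2) ℝ} (hg : Continuous g) (i : Fin 2)
    (z : ℝ × ℝ) (hz : z ∈ Ioo (0:ℝ) 1 ×ˢ Ioo (0:ℝ) 1) (hd : DifferentiableAt ℝ (besU g i) z)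
    (w : Fin 2 → ℝ) :
    ![fderiv ℝ (besU g i) z (1, 0), fderiv ℝ (besU g i) z (0, 1)] ⬝ᵥ w ≤
      Real.sqrt (w ⬝ᵥ (g ![z.1, z.2]).mulVec w) := by
  have e : ![fderiv ℝ (besU g i) z (1, 0), fderiv ℝ (besU g i) z (0, 1)] ⬝ᵥ w =
      fderiv ℝ (besU g i) z (w 0, w 1) := by
    have : ((w 0, w 1) : ℝ × ℝ) = w 0 • ((1:ℝ), (0:ℝ)) + w 1 • ((0:ℝ), (1:ℝ)) := by
      ext <;> simp
    rw [this, map_add, map_smul, map_smul]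
    simp [dotProduct, Fin.sum_univ_two, mul_comm]
  rw [e]
  have hsub : Ioo (0:ℝ) 1 ×ˢ Ioo (0:ℝ) 1 ⊆ Icc (0:ℝ) 1 ×ˢ Icc (0:ℝ) 1 :=
    prod_mono Ioo_subset_Icc_self Ioo_subset_Icc_self
  set x : Fin 2 → ℝ := ![z.1, z.2] with hx
  set I : ℝ → ℝ := fun s => ∫ t in (0:ℝ)..1, besN g (x + t • s • w) w with hI
  have cI : Continuous I := by
    apply intervalIntegral.continuous_parametric_intervalIntegral_of_continuous'
    exact (besN_cont hg).comp (f := fun q : ℝ × ℝ => (x + q.2 • q.1 • w, w)) (by fun_prop)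
  have hI0 : I 0 = Real.sqrt (w ⬝ᵥ (g x).mulVec w) := by simp [hI, besN]
  have hlimI : Tendsto I (𝓝[>] 0) (𝓝 (Real.sqrt (w ⬝ᵥ (g x).mulVec w))) := by
    rw [← hI0]; exact (cI.tendsto 0).mono_left nhdsWithin_le_nhds
  refine le_of_tendsto_of_tendsto (bes_slope _ z hd (w 0, w 1)) hlimI ?_
  have hev : ∀ᶠ s : ℝ in 𝓝[>] 0, z + s • ((w 0, w 1) : ℝ × ℝ) ∈ Ioo (0:ℝ) 1 ×ˢ Ioo (0:ℝ) 1 := by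
    apply Filter.Eventually.filter_mono nhdsWithin_le_nhds
    have hc : Continuous (fun s : ℝ => z + s • ((w 0, w 1) : ℝ × ℝ)) := by fun_prop
    apply hc.continuousAt.eventually_mem
    apply (isOpen_Ioo.prod isOpen_Ioo).mem_nhds
    simpa using hz
  filter_upwards [hev, self_mem_nhdsWithin] with s hs hs0
  have hs0 : 0 < s := hs0
  have h1 := besU_step hg i z (z + s • ((w 0, w 1) : ℝ × ℝ))
  rw [besC_of_mem (hsub hz), besC_of_mem (hsub hs)] at h1
  have e2 : ![(z + s • ((w 0, w 1) : ℝ × ℝ)).1, (z + s • ((w 0, w 1) : ℝ × ℝ)).2] - ![z.1, z.2]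
      = s • w := by
    ext j; fin_cases j <;> simp
  rw [e2] at h1
  have e3 : besSeg g x (s • w) = s * I s := by
    simp only [besSeg, hI]
    rw [← intervalIntegral.integral_const_mul]
    simp_rw [besN_smul _ _ _ hs0.le]
  rw [e3] at h1
  rw [inv_mul_le_iff₀ hs0]
  linarith

/-- **Besicovitch inequality (dimension 2).** Let `g` be a continuous Riemannian metric on the
unit square `[0,1]²` such that every Lipschitz curve joining the two opposite vertical sides
(`x₀ = 0` and `x₀ = 1`) has `g`-length at least `1`, and likewise for the horizontal sides
(`x₁ = 0` and `x₁ = 1`). Then the `g`-area `∫_{[0,1]²} √(det g)` is at least `1`. -/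
theorem besicovitch_inequality_dim2
    (g : (Fin 2 → ℝ) → Matrix (Fin 2) (Fin 2) ℝ)
    (hg_cont : Continuous g)
    (hg_posdef : ∀ p, (g p).PosDef)
    (hdist : ∀ i : Fin 2, ∀ γ : ℝ → (Fin 2 → ℝ), (∃ K : NNReal, LipschitzWith K γ) →
      (∀ t ∈ Set.Icc (0:ℝ) 1, γ t ∈ Set.Icc (0 : Fin 2 → ℝ) 1) →
      γ 0 i = 0 → γ 1 i = 1 →
      1 ≤ gLength2 g γ) :
    1 ≤ ∫ p in Set.Icc (0 : Fin 2 → ℝ) 1, Real.sqrt (g p).det := by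
  obtain ⟨K, hK⟩ := besU_lip hg_cont 0
  obtain ⟨K', hK'⟩ := besU_lip hg_cont 1
  set u := besU g 0 with hu
  set v := besU g 1 with hv
  have u0 : ∀ x y, x ≤ 0 → u (x, y) = 0 := by
    intro x y h
    simp only [hu, besU]
    rw [besF_zero g 0 _ (besC_mem _) (by simp [besC, h])]; simp
  have v0 : ∀ x y, y ≤ 0 → v (x, y) = 0 := by
    intro x y h
    simp only [hv, besU]
    rw [besF_zero g 1 _ (besC_mem _) (by simp [besC, h])]; simp
  have u1 : ∀ x y, 1 ≤ x → u (x, y) = 1 := by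
    intro x y h
    exact min_eq_right (besF_one hg_cont 0 (hdist 0) _ (besC_mem _) (by simp [besC, h]))
  have v1 : ∀ x y, 1 ≤ y → v (x, y) = 1 := by
    intro x y h
    exact min_eq_right (besF_one hg_cont 1 (hdist 1) _ (besC_mem _) (by simp [besC, h]))
  have uy : ∀ x y, 1 ≤ y → u (x, y) = u (x, 1) := by
    intro x y h
    simp [hu, besU, besC, h]
  have vx : ∀ x y, 1 ≤ x → v (x, y) = v (1, y) := by
    intro x y h
    simp [hv, besU, besC, h]
  have main := bes_null u v K K' hK hK' u0 u1 v0 v1 uy vx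
  set J : ℝ × ℝ → ℝ := fun p => fderiv ℝ u p (1, 0) * fderiv ℝ v p (0, 1)
    - fderiv ℝ u p (0, 1) * fderiv ℝ v p (1, 0) with hJ
  set S : Set (ℝ × ℝ) := Ioc (-1:ℝ) 2 ×ˢ Ioc (-1:ℝ) 2 with hS
  set R : Set (ℝ × ℝ) := Icc (0:ℝ) 1 ×ˢ Icc (0:ℝ) 1 with hR
  have hRS : R ⊆ S := by
    rintro ⟨a, b⟩ ⟨⟨h1, h2⟩, ⟨h3, h4⟩⟩
    simp only at h1 h2 h3 h4
    exact ⟨⟨by simp only; linarith, by simp only; linarith⟩,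
      ⟨by simp only; linarith, by simp only; linarith⟩⟩
  have hJint : IntegrableOn J S := by
    apply Integrable.of_integral_ne_zero
    rw [main]; exact one_ne_zero
  have hconst : ∀ (f : ℝ × ℝ → ℝ) (c : ℝ) (z : ℝ × ℝ), (∀ᶠ y in 𝓝 z, f y = c) →
      fderiv ℝ f z = 0 := by
    intro f c z h
    have : f =ᶠ[𝓝 z] fun _ => c := h
    rw [this.fderiv_eq]; simp
  have hzero : ∀ z, z ∉ R → J z = 0 := by
    intro z hz
    have hcases : z.1 < 0 ∨ 1 < z.1 ∨ z.2 < 0 ∨ 1 < z.2 := by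
      by_contra hcon
      push Not at hcon
      exact hz ⟨⟨hcon.1, hcon.2.1⟩, ⟨hcon.2.2.1, hcon.2.2.2⟩⟩
    rcases hcases with h | h | h | h
    · have : fderiv ℝ u z = 0 := by
        apply hconst u 0
        filter_upwards [(continuous_fst.continuousAt (x := z)).eventually_lt_const h] with y hy
        exact u0 y.1 y.2 (le_of_lt hy)
      simp [hJ, this]
    · have : fderiv ℝ u z = 0 := by
        apply hconst u 1
        filter_upwards [(continuous_fst.continuousAt (x := z)).eventually_const_lt h] with y hy
        exact u1 y.1 y.2 (le_of_lt hy)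
      simp [hJ, this]
    · have : fderiv ℝ v z = 0 := by
        apply hconst v 0
        filter_upwards [(continuous_snd.continuousAt (x := z)).eventually_lt_const h] with y hy
        exact v0 y.1 y.2 (le_of_lt hy)
      simp [hJ, this]
    · have : fderiv ℝ v z = 0 := by
        apply hconst v 1
        filter_upwards [(continuous_snd.continuousAt (x := z)).eventually_const_lt h] with y hy
        exact v1 y.1 y.2 (le_of_lt hy)
      simp [hJ, this]
  have hRm : MeasurableSet R := measurableSet_Icc.prod measurableSet_Icc
  have main2 : ∫ p in R, J p = 1 := by
    rw [← main]
    exact (setIntegral_eq_of_subset_of_forall_sdiff_eq_zero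
      (measurableSet_Ioc.prod measurableSet_Ioc) hRS (fun z hz => hzero z hz.2)).symm
  have hpull : ∫ p in Set.Icc (0 : Fin 2 → ℝ) 1, Real.sqrt (g p).det =
      ∫ z in R, Real.sqrt (g ![z.1, z.2]).det := by
    have mp := (volume_preserving_finTwoArrow ℝ).symm
    have := mp.setIntegral_preimage_emb (MeasurableEquiv.measurableEmbedding _)
      (fun p => Real.sqrt (g p).det) (Set.Icc (0 : Fin 2 → ℝ) 1)
    rw [← this]
    have hset : (MeasurableEquiv.finTwoArrow (α := ℝ)).symm ⁻¹' (Set.Icc (0 : Fin 2 → ℝ) 1) = R := by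
      ext z
      simp [hR, MeasurableEquiv.finTwoArrow, Pi.le_def, Fin.forall_fin_two, Set.mem_Icc, Prod.le_def]
    rw [hset]
    rfl
  have hRo : (Ioo (0:ℝ) 1 ×ˢ Ioo (0:ℝ) 1 : Set (ℝ × ℝ)) =ᵐ[volume] R :=
    Measure.set_prod_ae_eq Ioo_ae_eq_Icc Ioo_ae_eq_Icc
  have hφ : Continuous (fun z : ℝ × ℝ => Real.sqrt (g ![z.1, z.2]).det) := by
    have : Continuous (fun z : ℝ × ℝ => ![z.1, z.2]) := by fun_prop
    exact Real.continuous_sqrt.comp (hg_cont.comp this).matrix_det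
  have hφint : IntegrableOn (fun z : ℝ × ℝ => Real.sqrt (g ![z.1, z.2]).det) R :=
    hφ.continuousOn.integrableOn_compact (isCompact_Icc.prod isCompact_Icc)
  rw [hpull, ← main2, ← setIntegral_congr_set hRo, ← setIntegral_congr_set hRo]
  have hRoR : (Ioo (0:ℝ) 1 ×ˢ Ioo (0:ℝ) 1 : Set (ℝ × ℝ)) ⊆ R :=
    prod_mono Ioo_subset_Icc_self Ioo_subset_Icc_self
  apply setIntegral_mono_on_ae (hJint.mono_set (hRoR.trans hRS)) (hφint.mono_set hRoR)
    (measurableSet_Ioo.prod measurableSet_Ioo)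
  have du : ∀ᵐ p : ℝ × ℝ, DifferentiableAt ℝ u p := hK.ae_differentiableAt
  have dv : ∀ᵐ p : ℝ × ℝ, DifferentiableAt ℝ v p := hK'.ae_differentiableAt
  filter_upwards [du, dv] with z hzu hzv hz
  exact bes_linalg (g ![z.1, z.2]) (hg_posdef _) _ _
    (besU_fderiv hg_cont 0 z hz hzu) (besU_fderiv hg_cont 1 z hz hzv)
end
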